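/- arXiv:2011.13235 — 2 statements merged into one kernel-verified Lean document; each statement's English description precedes it below -/
import Mathlib

section
/- Let ũ : ℝ×ℝ → ℝ be three times continuously differentiable, and define u(x,t) = ũ(x−t, t) + 1. Set m = u − u_{xx}, m̃ = ũ − ũ_{xx} + 1 and ω̃ = ũ² − ũ_x² + 2ũ. Then the modified Camassa–Holm equation m_t + ((u² − u_x²) m)_x = 0 holds at a point (x,t) if and only if the equation m̃_t + (ω̃ m̃)_x = 0 holds at the point (x−t, t). -/
/-- Partial derivative in the first (spatial) variable of a curried function. -/
noncomputable def pdx (f : ℝ → ℝ → ℝ) : ℝ → ℝ → ℝ := fun x t => deriv (fun x' => f x' t) x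

/-- Partial derivative in the second (time) variable of a curried function. -/
noncomputable def pdt (f : ℝ → ℝ → ℝ) : ℝ → ℝ → ℝ := fun x t => deriv (fun t' => f x t') t

lemma hasDeriv_x {f : ℝ → ℝ → ℝ} (x t : ℝ)
    (hf : DifferentiableAt ℝ (fun p : ℝ × ℝ => f p.1 p.2) (x, t)) :
    HasDerivAt (fun x' => f x' t) (fderiv ℝ (fun p : ℝ × ℝ => f p.1 p.2) (x, t) (1, 0)) x := by
  have h2 : HasDerivAt (fun x' : ℝ => (x', t)) ((1 : ℝ), (0 : ℝ)) x :=
    (hasDerivAt_id x).prodMk (hasDerivAt_const x t)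
  exact HasFDerivAt.comp_hasDerivAt x hf.hasFDerivAt h2

lemma hasDeriv_t {f : ℝ → ℝ → ℝ} (x t : ℝ)
    (hf : DifferentiableAt ℝ (fun p : ℝ × ℝ => f p.1 p.2) (x, t)) :
    HasDerivAt (fun t' => f x t') (fderiv ℝ (fun p : ℝ × ℝ => f p.1 p.2) (x, t) (0, 1)) t := by
  have h2 : HasDerivAt (fun t' : ℝ => (x, t')) ((0 : ℝ), (1 : ℝ)) t :=
    (hasDerivAt_const t x).prodMk (hasDerivAt_id t)
  exact HasFDerivAt.comp_hasDerivAt t hf.hasFDerivAt h2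

lemma hasDeriv_shift {f : ℝ → ℝ → ℝ} (x t : ℝ)
    (hf : DifferentiableAt ℝ (fun p : ℝ × ℝ => f p.1 p.2) (x - t, t)) :
    HasDerivAt (fun t' => f (x - t') t')
      (fderiv ℝ (fun p : ℝ × ℝ => f p.1 p.2) (x - t, t) (-1, 1)) t := by
  have h2 : HasDerivAt (fun t' : ℝ => (x - t', t')) ((-1 : ℝ), (1 : ℝ)) t :=
    ((hasDerivAt_id t).const_sub x).prodMk (hasDerivAt_id t)
  exact HasFDerivAt.comp_hasDerivAt (f := fun t' : ℝ => (x - t', t')) t hf.hasFDerivAt h2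

lemma contDiff_pdx {f : ℝ → ℝ → ℝ} {n k : WithTop ℕ∞} (hk : k + 1 ≤ n) (hn : n ≠ 0)
    (hf : ContDiff ℝ n (fun p : ℝ × ℝ => f p.1 p.2)) :
    ContDiff ℝ k (fun p : ℝ × ℝ => pdx f p.1 p.2) := by
  have : (fun p : ℝ × ℝ => pdx f p.1 p.2)
      = fun p => fderiv ℝ (fun p : ℝ × ℝ => f p.1 p.2) p (1, 0) := by
    funext p
    exact (hasDeriv_x p.1 p.2 (hf.differentiable hn _)).deriv
  rw [this]
  exact (hf.fderiv_right hk).clm_apply contDiff_const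

/-- The substitution `u(x,t) = ũ(x−t,t) + 1` transforms the mCH equation
`m_t + ((u² − u_x²) m)_x = 0` (with `m = u − u_xx`) at `(x,t)` into the equation
`m̃_t + (ω̃ m̃)_x = 0` (with `m̃ = ũ − ũ_xx + 1`, `ω̃ = ũ² − ũ_x² + 2ũ`) at `(x−t,t)`. -/
theorem stmt0 (ut : ℝ → ℝ → ℝ) (hut : ContDiff ℝ 3 (fun p : ℝ × ℝ => ut p.1 p.2))
    (u : ℝ → ℝ → ℝ) (hu : ∀ x t, u x t = ut (x - t) t + 1)
    (m mt ω : ℝ → ℝ → ℝ)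
    (hm : ∀ x t, m x t = u x t - pdx (pdx u) x t)
    (hmt : ∀ x t, mt x t = ut x t - pdx (pdx ut) x t + 1)
    (hω : ∀ x t, ω x t = (ut x t) ^ 2 - (pdx ut x t) ^ 2 + 2 * ut x t)
    (x t : ℝ) :
    pdt m x t + pdx (fun x' t' => ((u x' t') ^ 2 - (pdx u x' t') ^ 2) * m x' t') x t = 0 ↔
      pdt mt (x - t) t + pdx (fun x' t' => ω x' t' * mt x' t') (x - t) t = 0 := by
  have c1 : ContDiff ℝ 2 (fun p : ℝ × ℝ => pdx ut p.1 p.2) :=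
    contDiff_pdx (n := 3) (by norm_num) (by norm_num) hut
  have c2 : ContDiff ℝ 1 (fun p : ℝ × ℝ => pdx (pdx ut) p.1 p.2) :=
    contDiff_pdx (n := 2) (by norm_num) (by norm_num) c1
  have d0 := hut.differentiable (by norm_num)
  have d1 := c1.differentiable (by norm_num)
  have d2 := c2.differentiable (by norm_num)
  have dm : Differentiable ℝ (fun p : ℝ × ℝ => mt p.1 p.2) := by
    simp only [hmt]
    exact (d0.sub d2).add_const 1
  have dw : Differentiable ℝ (fun p : ℝ × ℝ => ω p.1 p.2) := by
    simp only [hω]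
    exact ((d0.pow 2).sub (d1.pow 2)).add (d0.const_mul 2)
  have e1 : ∀ x t, pdx u x t = pdx ut (x - t) t := by
    intro x t
    simp only [pdx, hu, deriv_add_const]
    exact deriv_comp_sub_const (f := fun y => ut y t) t x
  have e2 : ∀ x t, pdx (pdx u) x t = pdx (pdx ut) (x - t) t := by
    intro x t
    have : (fun x' => pdx u x' t) = fun x' => pdx ut (x' - t) t := by
      funext x'
      exact e1 x' t
    change deriv (fun x' => pdx u x' t) x = _
    rw [this]
    exact deriv_comp_sub_const (f := fun y => pdx ut y t) t x
  have em : ∀ x t, m x t = mt (x - t) t := by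
    intro x t
    rw [hm, hmt, e2, hu]
    ring
  have ew : ∀ x t, (u x t) ^ 2 - (pdx u x t) ^ 2 = ω (x - t) t + 1 := by
    intro x t
    rw [hω, e1, hu]
    ring
  have a1 : pdt m x t = pdt mt (x - t) t - pdx mt (x - t) t := by
    simp only [pdt, pdx, em]
    rw [(hasDeriv_shift x t (dm _)).deriv, (hasDeriv_x (x - t) t (dm _)).deriv,
      (hasDeriv_t (x - t) t (dm _)).deriv, ← map_sub]
    norm_num
  have a2 : pdx (fun x' t' => ((u x' t') ^ 2 - (pdx u x' t') ^ 2) * m x' t') x t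
      = pdx (fun x' t' => ω x' t' * mt x' t') (x - t) t + pdx mt (x - t) t := by
    simp only [ew, em]
    have b1 := hasDeriv_x (x - t) t (dm _)
    have b2 := hasDeriv_x (x - t) t (dw _)
    have b3 := (b2.add_const 1).mul b1
    unfold pdx
    have s := deriv_comp_sub_const (f := fun y => (ω y t + 1) * mt y t) t x
    refine s.trans ?_
    refine b3.deriv.trans ?_
    rw [b1.deriv, show deriv (fun x' => ω x' t * mt x' t) (x - t) = _ from (b2.mul b1).deriv]
    ring
  rw [a1, a2]
  ring_nf
end

section
/- Let U ⊆ ℂ be an open neighborhood of i that is invariant under the maps μ ↦ 1/conj(μ) and μ ↦ −conj(μ), and let M : U → M₂(ℂ) be holomorphic with det M(μ) = 1 for all μ ∈ U, satisfying the symmetries M(μ) = conj(M(1/conj(μ))) and M(μ) = σ₃ · conj(M(−conj(μ))) · σ₃ for all μ ∈ U (conj applied entrywise to the matrix). Then there exist a nonzero real number a₁ and real numbers a₂, a₃ such that M(i) = [[a₁, 0], [0, a₁⁻¹]] and M'(i) = [[0, a₂], [a₃, 0]]. -/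
open Matrix Complex

noncomputable section

/-- The Pauli matrix `σ₃`. -/
def sigma3 : Matrix (Fin 2) (Fin 2) ℂ := !![1, 0; 0, -1]

lemma deriv_sym_inv (f : ℂ → ℂ) (U : Set ℂ) (hU : IsOpen U) (hi : Complex.I ∈ U)
    (hf : DifferentiableOn ℂ f U)
    (h : ∀ μ ∈ U, f μ = (starRingEnd ℂ) (f (1 / (starRingEnd ℂ) μ))) :
    deriv f Complex.I = (starRingEnd ℂ) (deriv f Complex.I) := by
  have hd : HasDerivAt f (deriv f Complex.I) Complex.I :=
    (hf.differentiableAt (hU.mem_nhds hi)).hasDerivAt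
  have h1 := hd.conj_conj
  have e : (starRingEnd ℂ) Complex.I = (Complex.I)⁻¹ := by simp
  rw [e] at h1
  have h2 := h1.comp Complex.I (hasDerivAt_inv Complex.I_ne_zero)
  have h3 : f =ᶠ[nhds Complex.I]
      ((starRingEnd ℂ) ∘ f ∘ (starRingEnd ℂ)) ∘ (fun x => x⁻¹) := by
    filter_upwards [hU.mem_nhds hi] with μ hμ
    simpa using h μ hμ
  have h4 := (h2.congr_of_eventuallyEq h3).deriv
  simpa using h4

lemma deriv_sym_neg (f : ℂ → ℂ) (U : Set ℂ) (hU : IsOpen U) (hi : Complex.I ∈ U) (c : ℂ)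
    (hf : DifferentiableOn ℂ f U)
    (h : ∀ μ ∈ U, f μ = c * (starRingEnd ℂ) (f (-(starRingEnd ℂ) μ))) :
    deriv f Complex.I = - (c * (starRingEnd ℂ) (deriv f Complex.I)) := by
  have hd : HasDerivAt f (deriv f Complex.I) Complex.I :=
    (hf.differentiableAt (hU.mem_nhds hi)).hasDerivAt
  have h1 := hd.conj_conj
  have e : (starRingEnd ℂ) Complex.I = -Complex.I := by simp
  rw [e] at h1
  have h2 := (h1.comp Complex.I (hasDerivAt_neg Complex.I)).const_mul c
  have h3 : f =ᶠ[nhds Complex.I]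
      fun y => c * (((starRingEnd ℂ) ∘ f ∘ (starRingEnd ℂ)) ∘ Neg.neg) y := by
    filter_upwards [hU.mem_nhds hi] with μ hμ
    simpa using h μ hμ
  have h4 := (h2.congr_of_eventuallyEq h3).deriv
  simpa using h4

/-- A unimodular matrix function holomorphic near `i`, satisfying the symmetries
`M(μ) = conj(M(1/μ̄))` and `M(μ) = σ₃ conj(M(−μ̄)) σ₃`, has at `μ = i` the structure
`M(i) = diag(a₁, a₁⁻¹)` with `a₁ ∈ ℝ∖{0}` and `M'(i) = [[0,a₂],[a₃,0]]` with `a₂,a₃ ∈ ℝ`. -/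
theorem stmt12 (U : Set ℂ) (hU : IsOpen U) (hiU : Complex.I ∈ U)
    (hUinv : ∀ μ ∈ U, 1 / (starRingEnd ℂ) μ ∈ U)
    (hUneg : ∀ μ ∈ U, -(starRingEnd ℂ) μ ∈ U)
    (M : ℂ → Matrix (Fin 2) (Fin 2) ℂ)
    (hhol : ∀ p q : Fin 2, DifferentiableOn ℂ (fun μ => M μ p q) U)
    (hdet : ∀ μ ∈ U, (M μ).det = 1)
    (hsym1 : ∀ μ ∈ U, M μ = (M (1 / (starRingEnd ℂ) μ)).map (starRingEnd ℂ))
    (hsym2 : ∀ μ ∈ U, M μ = sigma3 * (M (-(starRingEnd ℂ) μ)).map (starRingEnd ℂ) * sigma3) :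
    ∃ a₁ a₂ a₃ : ℝ, a₁ ≠ 0 ∧
      M Complex.I = !![(a₁ : ℂ), 0; 0, (a₁ : ℂ)⁻¹] ∧
      (Matrix.of fun p q : Fin 2 => deriv (fun μ => M μ p q) Complex.I) =
        !![0, (a₂ : ℂ); (a₃ : ℂ), 0] := by
  have s1 : ∀ p q, ∀ μ ∈ U, M μ p q = (starRingEnd ℂ) (M (1 / (starRingEnd ℂ) μ) p q) := by
    intro p q μ hμ
    conv_lhs => rw [hsym1 μ hμ]
    rfl
  have s2 : ∀ p q, ∀ μ ∈ U, M μ p q =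
      (if p = q then 1 else -1) * (starRingEnd ℂ) (M (-(starRingEnd ℂ) μ) p q) := by
    intro p q μ hμ
    conv_lhs => rw [hsym2 μ hμ]
    fin_cases p <;> fin_cases q <;> 
      simp [sigma3, Matrix.mul_apply, Matrix.vecMul, dotProduct, Fin.sum_univ_two]
  have d1 := fun p q => deriv_sym_inv _ U hU hiU (hhol p q) (s1 p q)
  have d2 := fun p q => deriv_sym_neg _ U hU hiU _ (hhol p q) (s2 p q)
  have v1 : ∀ p q, M Complex.I p q = (starRingEnd ℂ) (M Complex.I p q) := by
    intro p q
    simpa using s1 p q _ hiU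
  have v2 : ∀ p q, p ≠ q → M Complex.I p q = 0 := by
    intro p q hpq
    have h := s2 p q _ hiU
    simp only [Complex.conj_I, neg_neg, if_neg hpq] at h
    rw [← v1 p q] at h
    linear_combination h / 2
  have w2 : ∀ p, deriv (fun μ => M μ p p) Complex.I = 0 := by
    intro p
    have h := d2 p p
    rw [← d1 p p, if_pos rfl] at h
    linear_combination h / 2
  obtain ⟨a, ha⟩ := Complex.conj_eq_iff_real.1 (v1 0 0).symm
  obtain ⟨b, hb⟩ := Complex.conj_eq_iff_real.1 (d1 0 1).symm
  obtain ⟨c, hc⟩ := Complex.conj_eq_iff_real.1 (d1 1 0).symm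
  have hD := hdet _ hiU
  rw [Matrix.det_fin_two, v2 0 1 (by decide), ha] at hD
  have hD' : (a : ℂ) * M Complex.I 1 1 = 1 := by linear_combination hD
  refine ⟨a, b, c, ?_, ?_, ?_⟩
  · rintro rfl
    simp at hD'
  · ext p q
    fin_cases p <;> fin_cases q
    · simpa using ha
    · simpa using v2 0 1 (by decide)
    · simpa using v2 1 0 (by decide)
    · simpa using eq_inv_of_mul_eq_one_right hD'
  · ext p q
    fin_cases p <;> fin_cases q
    · simpa using w2 0
    · simpa using hb
    · simpa using hc
    · simpa using w2 1

end
end
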